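/- Let A < B be real numbers and let α : [A,B] → ℝ be Hölder continuous with exponent γ ∈ (0,1]. Define Φ(z) = exp( ∫_A^B α(r)/(z−r) dr ) for z ∈ ℂ \ [A,B]. Then for every s ∈ (A,B), lim_{ε→0⁺} Φ(s + iε) = exp( −π H[α](s) − iπ α(s) ) and lim_{ε→0⁺} Φ(s − iε) = exp( −π H[α](s) + iπ α(s) ); in particular the boundary values satisfy Φ⁺(s) = e^{−2πi α(s)} Φ⁻(s). -/

import Mathlib

open Filter Topology intervalIntegral

/-!
Write `f r = f s + (r - s) • slope f s r`. When the slope is integrable, which for Hölder `f`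
follows from `‖slope f s r‖ ≤ C |r - s| ^ (γ - 1)`, the Cauchy transform splits as

  `∫ (z - r)⁻¹ • f r = ∫ ((r - s) / (z - r)) • slope f s r + (log (z - A) - log (z - B)) • f s`.

As `z → s` non-tangentially the kernel `(r - s) / (z - r)` stays bounded and tends to `-1`, so
dominated convergence handles the first term. In the second, `z - B` approaches the branch cut of
`log`, and the two one-sided values `log (B - s) ± iπ` produce the terms `∓ iπ f(s)`. The same
splitting of the principal value integral identifies what remains as `-π H[f](s)`.
-/

section

open MeasureTheory Set
open scoped NNReal Real

variable {E F : Type*} [NormedAddCommGroup E] [NormedAddCommGroup F] {A B s : ℝ}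

section PrincipalValue

variable [NormedSpace ℝ E] [NormedSpace ℝ F] {g g₁ g₂ : ℝ → E} {L L₁ L₂ : E}

/-- The Cauchy principal value of `∫ r in A..B, g r` at the singularity `s` exists and equals `L`.
The integrability fields keep the truncated integrals from being junk values. -/
structure HasPrincipalValue (g : ℝ → E) (A B s : ℝ) (L : E) : Prop where
  intervalIntegrable_left : ∀ᶠ ε in 𝓝[>] (0 : ℝ), IntervalIntegrable g volume A (s - ε)
  intervalIntegrable_right : ∀ᶠ ε in 𝓝[>] (0 : ℝ), IntervalIntegrable g volume (s + ε) B
  tendsto : Tendsto (fun ε : ℝ => (∫ r in A..(s - ε), g r) + ∫ r in (s + ε)..B, g r)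
    (𝓝[>] 0) (𝓝 L)

namespace HasPrincipalValue

lemma unique (h₁ : HasPrincipalValue g A B s L₁) (h₂ : HasPrincipalValue g A B s L₂) : L₁ = L₂ :=
  tendsto_nhds_unique h₁.tendsto h₂.tendsto

lemma add (h₁ : HasPrincipalValue g₁ A B s L₁) (h₂ : HasPrincipalValue g₂ A B s L₂) :
    HasPrincipalValue (fun r => g₁ r + g₂ r) A B s (L₁ + L₂) where
  intervalIntegrable_left := by
    filter_upwards [h₁.intervalIntegrable_left, h₂.intervalIntegrable_left] with ε i₁ i₂
    exact i₁.add i₂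
  intervalIntegrable_right := by
    filter_upwards [h₁.intervalIntegrable_right, h₂.intervalIntegrable_right] with ε i₁ i₂
    exact i₁.add i₂
  tendsto := by
    refine (h₁.tendsto.add h₂.tendsto).congr' ?_
    filter_upwards [h₁.intervalIntegrable_left, h₂.intervalIntegrable_left,
      h₁.intervalIntegrable_right, h₂.intervalIntegrable_right] with ε l₁ l₂ r₁ r₂
    rw [integral_add l₁ l₂, integral_add r₁ r₂]
    abel

lemma clm_comp [CompleteSpace E] [CompleteSpace F] (T : E →L[ℝ] F)
    (h : HasPrincipalValue g A B s L) :
    HasPrincipalValue (fun r => T (g r)) A B s (T L) where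
  intervalIntegrable_left := h.intervalIntegrable_left.mono fun _ i =>
    ⟨T.integrable_comp i.1, T.integrable_comp i.2⟩
  intervalIntegrable_right := h.intervalIntegrable_right.mono fun _ i =>
    ⟨T.integrable_comp i.1, T.integrable_comp i.2⟩
  tendsto := by
    refine ((T.continuous.tendsto L).comp h.tendsto).congr' ?_
    filter_upwards [h.intervalIntegrable_left, h.intervalIntegrable_right] with ε hl hr
    simp only [Function.comp_apply, map_add, T.intervalIntegral_comp_comm hl,
      T.intervalIntegral_comp_comm hr]

end HasPrincipalValue

lemma eventually_sub_mem_Ioo_and_add_mem_Ioo (hs : s ∈ Ioo A B) :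
    ∀ᶠ ε in 𝓝[>] (0 : ℝ), s - ε ∈ Ioo A s ∧ s + ε ∈ Ioo s B := by
  filter_upwards [Ioo_mem_nhdsGT (sub_pos.2 hs.1), Ioo_mem_nhdsGT (sub_pos.2 hs.2)]
    with ε ⟨hε, hA⟩ ⟨_, hB⟩
  exact ⟨⟨by linarith, by linarith⟩, ⟨by linarith, by linarith⟩⟩

lemma hasPrincipalValue_integral (hs : s ∈ Ioo A B) (hg : IntervalIntegrable g volume A B) :
    HasPrincipalValue g A B s (∫ r in A..B, g r) := by
  have hAB : A ≤ B := (hs.1.trans hs.2).le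
  have hsub {a b : ℝ} (ha : a ∈ Icc A B) (hb : b ∈ Icc A B) : IntervalIntegrable g volume a b :=
    hg.mono_set (uIcc_of_le hAB ▸ uIcc_subset_Icc ha hb)
  have hmem := eventually_sub_mem_Ioo_and_add_mem_Ioo hs
  have hprim : ContinuousAt (fun b => ∫ r in A..b, g r) s := by
    refine (continuousOn_primitive_interval' hg left_mem_uIcc).continuousAt ?_
    rw [uIcc_of_le hAB]
    exact Icc_mem_nhds hs.1 hs.2
  have hlim {u : ℝ → ℝ} (hu : Continuous u) (hu0 : u 0 = s) :
      Tendsto (fun ε => ∫ r in A..u ε, g r) (𝓝[>] 0) (𝓝 (∫ r in A..s, g r)) :=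
    hprim.tendsto.comp ((hu.tendsto' 0 s hu0).mono_left nhdsWithin_le_nhds)
  refine ⟨hmem.mono fun ε h => hsub (left_mem_Icc.2 hAB) ⟨h.1.1.le, (h.1.2.trans hs.2).le⟩,
    hmem.mono fun ε h => hsub ⟨(hs.1.trans h.2.1).le, h.2.2.le⟩ (right_mem_Icc.2 hAB), ?_⟩
  have hsum := (hlim (u := fun ε => s - ε) (by fun_prop) (sub_zero s)).add
    ((hlim (u := fun ε => s + ε) (by fun_prop) (add_zero s)).const_sub (∫ r in A..B, g r))
  rw [add_sub_cancel] at hsum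
  refine hsum.congr' (hmem.mono fun ε h => ?_)
  have hright : IntervalIntegrable g volume A (s + ε) :=
    hsub (left_mem_Icc.2 hAB) ⟨(hs.1.trans h.2.1).le, h.2.2.le⟩
  exact congrArg _ (integral_interval_sub_left hg hright)

lemma hasPrincipalValue_inv_sub (hs : s ∈ Ioo A B) :
    HasPrincipalValue (fun r => (r - s)⁻¹) A B s (Real.log (B - s) - Real.log (s - A)) := by
  have hmem := eventually_sub_mem_Ioo_and_add_mem_Ioo hs
  have hint {a b : ℝ} (h : s ∉ uIcc a b) :
      IntervalIntegrable (fun r => (r - s)⁻¹) volume a b :=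
    ContinuousOn.intervalIntegrable <| ContinuousOn.inv₀ (by fun_prop) fun r hr =>
      sub_ne_zero.2 (ne_of_mem_of_not_mem hr h)
  refine ⟨hmem.mono fun ε h => hint (notMem_uIcc_of_gt hs.1 h.1.2),
    hmem.mono fun ε h => hint (notMem_uIcc_of_lt h.2.1 hs.2), ?_⟩
  refine tendsto_const_nhds.congr' (hmem.mono fun ε ⟨hl, hr⟩ => ?_)
  have hε : 0 < ε := by linarith [hl.2]
  have hA : 0 < s - A := sub_pos.2 hs.1
  have hB : 0 < B - s := sub_pos.2 hs.2
  simp only [integral_comp_sub_right (fun x => x⁻¹)]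
  rw [integral_inv_of_neg (sub_neg.2 hs.1) (sub_neg.2 hl.2),
    integral_inv_of_pos (sub_pos.2 hr.1) hB, add_sub_cancel_left, sub_sub_cancel_left,
    ← neg_sub s A, neg_div_neg_eq, Real.log_div hε.ne' hA.ne', Real.log_div hB.ne' hε.ne']
  ring

end PrincipalValue

section HilbertTransform

variable [NormedSpace ℝ E] [NormedSpace ℝ F] {f : ℝ → E} {H : E}

/-- The finite Hilbert transform `H[f](s) = (1 / π) PV ∫_A^B f(r) / (r - s) dr` exists and
equals `H`. -/
def HasFiniteHilbertTransform (f : ℝ → E) (A B s : ℝ) (H : E) : Prop :=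
  HasPrincipalValue (fun r => (r - s)⁻¹ • f r) A B s (π • H)

lemma HasFiniteHilbertTransform.clm_comp [CompleteSpace E] [CompleteSpace F] (T : E →L[ℝ] F)
    (h : HasFiniteHilbertTransform f A B s H) :
    HasFiniteHilbertTransform (fun r => T (f r)) A B s (T H) := by
  simpa only [HasFiniteHilbertTransform, map_smul] using HasPrincipalValue.clm_comp T h

lemma HasFiniteHilbertTransform.unique {H' : E} (h : HasFiniteHilbertTransform f A B s H)
    (h' : HasFiniteHilbertTransform f A B s H') : H = H' :=
  smul_right_injective E Real.pi_ne_zero (HasPrincipalValue.unique h h')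

lemma HasFiniteHilbertTransform.exists_ofReal {α : ℝ → ℝ} {H : ℂ}
    (h : HasFiniteHilbertTransform (fun r => (α r : ℂ)) A B s H) :
    ∃ H' : ℝ, H = H' ∧ HasFiniteHilbertTransform α A B s H' := by
  have hre : HasFiniteHilbertTransform α A B s H.re := h.clm_comp Complex.reCLM
  exact ⟨H.re, h.unique (hre.clm_comp Complex.ofRealCLM), hre⟩

lemma inv_sub_smul_eq_slope_add (f : ℝ → E) (s r : ℝ) :
    (r - s)⁻¹ • f r = slope f s r + (r - s)⁻¹ • f s := by
  rw [slope_def_module, smul_sub, sub_add_cancel]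

lemma hasPrincipalValue_inv_sub_smul [CompleteSpace E] (hs : s ∈ Ioo A B)
    (hf : IntervalIntegrable (slope f s) volume A B) :
    HasPrincipalValue (fun r => (r - s)⁻¹ • f r) A B s
      ((∫ r in A..B, slope f s r) + (Real.log (B - s) - Real.log (s - A)) • f s) := by
  simp only [inv_sub_smul_eq_slope_add f s]
  exact (hasPrincipalValue_integral hs hf).add
    ((hasPrincipalValue_inv_sub hs).clm_comp (ContinuousLinearMap.toSpanSingleton ℝ (f s)))

lemma hasFiniteHilbertTransform_of_slope [CompleteSpace E] (hs : s ∈ Ioo A B)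
    (hf : IntervalIntegrable (slope f s) volume A B) :
    HasFiniteHilbertTransform f A B s
      (π⁻¹ • ((∫ r in A..B, slope f s r) + (Real.log (B - s) - Real.log (s - A)) • f s)) := by
  rw [HasFiniteHilbertTransform, smul_inv_smul₀ Real.pi_ne_zero]
  exact hasPrincipalValue_inv_sub_smul hs hf

end HilbertTransform

section Holder

lemma holderOnWith_of_dist_le {X Y : Type*} [PseudoMetricSpace X] [PseudoMetricSpace Y]
    {C γ : ℝ≥0} {f : X → Y} {t : Set X}
    (h : ∀ x ∈ t, ∀ y ∈ t, dist (f x) (f y) ≤ C * dist x y ^ (γ : ℝ)) : HolderOnWith C γ f t := by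
  intro x hx y hy
  have hnn : nndist (f x) (f y) ≤ C * nndist x y ^ (γ : ℝ) := by exact_mod_cast h x hx y hy
  rw [edist_nndist, edist_nndist, ← ENNReal.coe_rpow_of_nonneg _ γ.coe_nonneg]
  exact_mod_cast hnn

lemma intervalIntegrable_abs_sub_rpow {p : ℝ} (hp : -1 < p) (s A B : ℝ) :
    IntervalIntegrable (fun r => |r - s| ^ p) volume A B := by
  have heven : IntervalIntegrable (fun x : ℝ => |x| ^ p) volume (A - s) (B - s) := by
    refine intervalIntegrable_of_even (fun x => by rw [abs_neg]) (fun x hx => ?_)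
    refine (intervalIntegrable_rpow' hp).congr fun y hy => ?_
    rw [uIoc_of_le hx.le] at hy
    simp only [abs_of_pos hy.1]
  simpa only [sub_add_cancel] using heven.comp_sub_right s

variable [NormedSpace ℝ E] {f : ℝ → E} {C γ : ℝ≥0} {t : Set ℝ}

lemma norm_slope_le_of_holderOnWith (hf : HolderOnWith C γ f t) {r : ℝ} (hs : s ∈ t) (hr : r ∈ t) :
    ‖slope f s r‖ ≤ C * |r - s| ^ ((γ : ℝ) - 1) := by
  rcases eq_or_ne r s with rfl | hne
  · rw [slope_same, norm_zero]
    positivity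
  have hpos : 0 < |r - s| := abs_pos.2 (sub_ne_zero.2 hne)
  calc ‖slope f s r‖ = dist (f r) (f s) / |r - s| := by
        rw [slope_def_module, norm_smul, norm_inv, Real.norm_eq_abs, dist_eq_norm, inv_mul_eq_div]
    _ ≤ C * |r - s| ^ (γ : ℝ) / |r - s| := by
        gcongr
        exact hf.dist_le hr hs
    _ = C * |r - s| ^ ((γ : ℝ) - 1) := by rw [Real.rpow_sub_one hpos.ne', mul_div_assoc]

lemma intervalIntegrable_slope_of_holderOnWith (hγ : 0 < γ) (hf : HolderOnWith C γ f (uIcc A B))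
    (hs : s ∈ uIcc A B) : IntervalIntegrable (slope f s) volume A B := by
  have hdom : IntervalIntegrable (fun r => C * |r - s| ^ ((γ : ℝ) - 1)) volume A B :=
    (intervalIntegrable_abs_sub_rpow (by simpa using hγ) s A B).const_mul _
  refine hdom.mono_fun' ?_ ?_
  · have hcont : ContinuousOn (fun r => f r - f s) (uIoc A B) :=
      ((hf.continuousOn hγ).mono uIoc_subset_uIcc).sub continuousOn_const
    have hinv : Measurable fun r : ℝ => (r - s)⁻¹ := by fun_prop
    exact hinv.aestronglyMeasurable.smul (hcont.aestronglyMeasurable measurableSet_uIoc)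
  · filter_upwards [ae_restrict_mem measurableSet_uIoc] with r hr
    exact norm_slope_le_of_holderOnWith hf hs (uIoc_subset_uIcc hr)

end Holder

section NonTangential

variable {K : ℝ}

/-- The double cone at `s` on the real axis in which points approach `s` non-tangentially: the
distance to `s` is at most `K` times the distance to the axis. -/
def nonTangentialCone (s K : ℝ) : Set ℂ := {z | ‖z - s‖ ≤ K * |z.im|}

lemma norm_sub_le_of_mem_nonTangentialCone {z : ℂ} (hz : z ∈ nonTangentialCone s K) (r : ℝ) :
    ‖(r - s : ℂ)‖ ≤ (1 + |K|) * ‖z - r‖ := by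
  have him : |z.im| ≤ ‖z - r‖ := by simpa using Complex.abs_im_le_norm (z - r)
  calc ‖(r - s : ℂ)‖ ≤ ‖(r : ℂ) - z‖ + ‖z - s‖ := norm_sub_le_norm_sub_add_norm_sub _ _ _
    _ ≤ ‖z - r‖ + |K| * |z.im| := by
        rw [norm_sub_rev]
        gcongr
        exact le_trans hz (by gcongr; exact le_abs_self K)
    _ ≤ ‖z - r‖ + |K| * ‖z - r‖ := by gcongr
    _ = (1 + |K|) * ‖z - r‖ := by ring

lemma tendsto_vertical_nhdsWithin_upper (s : ℝ) :
    Tendsto (fun ε : ℝ => (s : ℂ) + ε * Complex.I) (𝓝[>] 0)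
      (𝓝[nonTangentialCone s 1 ∩ {z | 0 < z.im}] s) := by
  refine tendsto_nhdsWithin_iff.2 ⟨?_, ?_⟩
  · exact (Continuous.tendsto' (by fun_prop) _ _ (by simp)).mono_left nhdsWithin_le_nhds
  · filter_upwards [self_mem_nhdsWithin] with ε hε
    simpa [nonTangentialCone] using hε

lemma tendsto_vertical_nhdsWithin_lower (s : ℝ) :
    Tendsto (fun ε : ℝ => (s : ℂ) - ε * Complex.I) (𝓝[>] 0)
      (𝓝[nonTangentialCone s 1 ∩ {z | z.im < 0}] s) := by
  refine tendsto_nhdsWithin_iff.2 ⟨?_, ?_⟩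
  · exact (Continuous.tendsto' (by fun_prop) _ _ (by simp)).mono_left nhdsWithin_le_nhds
  · filter_upwards [self_mem_nhdsWithin] with ε hε
    simpa [nonTangentialCone] using hε

variable [NormedSpace ℂ E]

lemma tendsto_integral_div_smul_nonTangential {g : ℝ → E} (hg : IntervalIntegrable g volume A B) :
    Tendsto (fun z : ℂ => ∫ r in A..B, ((r - s) / (z - r) : ℂ) • g r)
      (𝓝[nonTangentialCone s K] s) (𝓝 (-∫ r in A..B, g r)) := by
  rw [← intervalIntegral.integral_neg]
  refine tendsto_integral_filter_of_dominated_convergence (fun r => (1 + |K|) * ‖g r‖) ?_ ?_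
    (hg.norm.const_mul _) ?_
  · refine Eventually.of_forall fun z => ?_
    have hker : Measurable fun r : ℝ => ((r - s) / (z - r) : ℂ) := by fun_prop
    exact hker.aestronglyMeasurable.smul hg.def'.aestronglyMeasurable
  · filter_upwards [self_mem_nhdsWithin] with z hz
    refine Eventually.of_forall fun r _ => ?_
    rw [norm_smul, norm_div]
    gcongr
    exact div_le_of_le_mul₀ (norm_nonneg _) (by positivity)
      (norm_sub_le_of_mem_nonTangentialCone hz r)
  · filter_upwards [Measure.ae_ne volume s] with r hr _
    have hne : (s - r : ℂ) ≠ 0 := by exact_mod_cast sub_ne_zero.2 hr.symm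
    have hker : ContinuousAt (fun z : ℂ => ((r - s) / (z - r) : ℂ)) s :=
      continuousAt_const.div (by fun_prop) hne
    have hval : ((r - s) / (s - r) : ℂ) = -1 := by rw [← neg_sub (s : ℂ) r, neg_div, div_self hne]
    rw [← neg_one_smul ℂ (g r), ← hval]
    exact (hker.tendsto.mono_left nhdsWithin_le_nhds).smul_const (g r)

end NonTangential

section CauchyTransform

lemma sub_ofReal_ne_zero_of_im_ne_zero {z : ℂ} (hz : z.im ≠ 0) (r : ℝ) : z - r ≠ 0 :=
  fun h => hz (by simpa using congrArg Complex.im h)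

lemma integral_inv_sub_ofReal {z : ℂ} (hz : z.im ≠ 0) (A B : ℝ) :
    ∫ r in A..B, (z - r)⁻¹ = Complex.log (z - A) - Complex.log (z - B) := by
  have hderiv (r : ℝ) : HasDerivAt (fun r : ℝ => -Complex.log (z - r)) (z - r)⁻¹ r := by
    have hslit : z - r ∈ Complex.slitPlane := Or.inr (by simpa using hz)
    refine (((hasDerivAt_id r).ofReal_comp.const_sub z).clog_real hslit).neg.congr_deriv ?_
    simp [neg_div]
  have hcont : Continuous fun r : ℝ => (z - r)⁻¹ :=
    Continuous.inv₀ (by fun_prop) (sub_ofReal_ne_zero_of_im_ne_zero hz)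
  rw [integral_eq_sub_of_hasDerivAt (fun r _ => hderiv r) (hcont.intervalIntegrable A B)]
  ring

lemma tendsto_log_sub_ofReal_of_gt (h : A < s) :
    Tendsto (fun z : ℂ => Complex.log (z - A)) (𝓝 s) (𝓝 (Real.log (s - A) : ℂ)) := by
  have hslit : (s - A : ℂ) ∈ Complex.slitPlane := Or.inl (by simpa using h)
  have hcont : ContinuousAt (fun z : ℂ => Complex.log (z - A)) s :=
    ContinuousAt.clog (by fun_prop) hslit
  have hval : (Real.log (s - A) : ℂ) = Complex.log (s - A) := by
    rw [Complex.ofReal_log (sub_nonneg.2 h.le), Complex.ofReal_sub]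
  exact hval ▸ hcont.tendsto

lemma norm_ofReal_sub_of_le (h : s ≤ B) : ‖(s - B : ℂ)‖ = B - s := by
  rw [← Complex.ofReal_sub, Complex.norm_real, Real.norm_of_nonpos (sub_nonpos.2 h), neg_sub]

lemma tendsto_log_sub_ofReal_of_lt_upper (h : s < B) :
    Tendsto (fun z : ℂ => Complex.log (z - B)) (𝓝[{z | 0 < z.im}] s)
      (𝓝 (Real.log (B - s) + π * Complex.I)) := by
  rw [← norm_ofReal_sub_of_le h.le]
  refine (Complex.tendsto_log_nhdsWithin_im_nonneg_of_re_neg_of_im_zero (z := (s - B : ℂ))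
    (by simpa using h) (by simp)).comp (tendsto_nhdsWithin_iff.2 ⟨?_, ?_⟩)
  · exact (Continuous.tendsto (by fun_prop) _).mono_left nhdsWithin_le_nhds
  · filter_upwards [self_mem_nhdsWithin] with z hz
    simpa using hz.le

lemma tendsto_log_sub_ofReal_of_lt_lower (h : s < B) :
    Tendsto (fun z : ℂ => Complex.log (z - B)) (𝓝[{z | z.im < 0}] s)
      (𝓝 (Real.log (B - s) - π * Complex.I)) := by
  rw [← norm_ofReal_sub_of_le h.le]
  refine (Complex.tendsto_log_nhdsWithin_im_neg_of_re_neg_of_im_zero (z := (s - B : ℂ))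
    (by simpa using h) (by simp)).comp (tendsto_nhdsWithin_iff.2 ⟨?_, ?_⟩)
  · exact (Continuous.tendsto (by fun_prop) _).mono_left nhdsWithin_le_nhds
  · filter_upwards [self_mem_nhdsWithin] with z hz
    simpa using hz

variable [NormedSpace ℂ E] {f : ℝ → E} {H : E} {K : ℝ}

/-- The Cauchy transform of `f` on `[A, B]`, with the kernel `1 / (z - r)` and without the factor
`1 / (2πi)`. -/
noncomputable def cauchyTransform (f : ℝ → E) (A B : ℝ) (z : ℂ) : E :=
  ∫ r in A..B, (z - r)⁻¹ • f r

lemma cauchyTransform_eq_integral_slope_add [CompleteSpace E]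
    (hf : IntervalIntegrable (slope f s) volume A B) {z : ℂ} (hz : z.im ≠ 0) :
    cauchyTransform f A B z = (∫ r in A..B, ((r - s) / (z - r) : ℂ) • slope f s r) +
      (Complex.log (z - A) - Complex.log (z - B)) • f s := by
  have hne := sub_ofReal_ne_zero_of_im_ne_zero hz
  have hinv : Continuous fun r : ℝ => (z - r)⁻¹ • f s :=
    (Continuous.inv₀ (by fun_prop) hne).smul continuous_const
  have hker : Continuous fun r : ℝ => ((r - s) / (z - r) : ℂ) :=
    Continuous.div₀ (by fun_prop) (by fun_prop) hne
  have hsplit (r : ℝ) : (z - r)⁻¹ • f r =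
      ((r - s) / (z - r) : ℂ) • slope f s r + (z - r)⁻¹ • f s := by
    rw [div_eq_inv_mul, mul_smul, ← smul_add, ← Complex.ofReal_sub, Complex.coe_smul,
      sub_smul_slope, vsub_eq_sub, sub_add_cancel]
  simp only [cauchyTransform, hsplit]
  rw [integral_add (hf.continuousOn_smul hker.continuousOn) (hinv.intervalIntegrable A B),
    intervalIntegral.integral_smul_const, integral_inv_sub_ofReal hz]

lemma tendsto_cauchyTransform_of_tendsto_log [CompleteSpace E] (hs : s ∈ Ioo A B)
    (hf : IntervalIntegrable (slope f s) volume A B) (hH : HasFiniteHilbertTransform f A B s H)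
    {U : Set ℂ} (hU : ∀ z ∈ U, z.im ≠ 0) {w : ℂ}
    (hlog : Tendsto (fun z : ℂ => Complex.log (z - B)) (𝓝[U] s) (𝓝 (Real.log (B - s) + w))) :
    Tendsto (cauchyTransform f A B) (𝓝[nonTangentialCone s K ∩ U] s) (𝓝 (-(π • H) - w • f s)) := by
  have hlogs : Tendsto (fun z : ℂ => (Complex.log (z - A) - Complex.log (z - B)) • f s)
      (𝓝[U] s) (𝓝 (((Real.log (s - A) : ℂ) - (Real.log (B - s) + w)) • f s)) :=
    (((tendsto_log_sub_ofReal_of_gt hs.1).mono_left nhdsWithin_le_nhds).sub hlog).smul_const _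
  have hsum := ((tendsto_integral_div_smul_nonTangential hf).mono_left
    (nhdsWithin_mono _ inter_subset_left)).add
    (hlogs.mono_left (nhdsWithin_mono _ (inter_subset_right (s := nonTangentialCone s K))))
  have hlim : -(π • H) - w • f s = (-∫ r in A..B, slope f s r) +
      ((Real.log (s - A) : ℂ) - (Real.log (B - s) + w)) • f s := by
    rw [HasPrincipalValue.unique hH (hasPrincipalValue_inv_sub_smul hs hf), ← Complex.coe_smul]
    push_cast
    module
  rw [hlim]
  refine hsum.congr' ?_
  filter_upwards [self_mem_nhdsWithin] with z hz
  exact (cauchyTransform_eq_integral_slope_add hf (hU z hz.2)).symm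

theorem tendsto_cauchyTransform_upper [CompleteSpace E] (hs : s ∈ Ioo A B)
    (hf : IntervalIntegrable (slope f s) volume A B) (hH : HasFiniteHilbertTransform f A B s H) :
    Tendsto (cauchyTransform f A B) (𝓝[nonTangentialCone s K ∩ {z | 0 < z.im}] s)
      (𝓝 (-(π • H) - (π * Complex.I) • f s)) :=
  tendsto_cauchyTransform_of_tendsto_log hs hf hH (fun _ => ne_of_gt)
    (tendsto_log_sub_ofReal_of_lt_upper hs.2)

theorem tendsto_cauchyTransform_lower [CompleteSpace E] (hs : s ∈ Ioo A B)
    (hf : IntervalIntegrable (slope f s) volume A B) (hH : HasFiniteHilbertTransform f A B s H) :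
    Tendsto (cauchyTransform f A B) (𝓝[nonTangentialCone s K ∩ {z | z.im < 0}] s)
      (𝓝 (-(π • H) + (π * Complex.I) • f s)) := by
  have hlog := tendsto_log_sub_ofReal_of_lt_lower hs.2
  rw [sub_eq_add_neg] at hlog
  have h := tendsto_cauchyTransform_of_tendsto_log (K := K) hs hf hH (fun _ => ne_of_lt) hlog
  rwa [neg_smul (π * Complex.I : ℂ), sub_neg_eq_add] at h

end CauchyTransform

theorem boundary_values_of_canonical_solution_general {α : ℝ → ℂ} (hs : s ∈ Ioo A B)
    (hα : IntervalIntegrable (slope α s) volume A B) {Φ : ℂ → ℂ}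
    (hΦ : ∀ z : ℂ, z.im ≠ 0 → Φ z = Complex.exp (∫ r in A..B, α r / (z - r))) :
    ∃ Hαs : ℂ, HasFiniteHilbertTransform α A B s Hαs ∧
      (∀ K : ℝ, Tendsto Φ (𝓝[nonTangentialCone s K ∩ {z | 0 < z.im}] s)
        (𝓝 (Complex.exp (-(π * Hαs) - π * α s * Complex.I)))) ∧
      (∀ K : ℝ, Tendsto Φ (𝓝[nonTangentialCone s K ∩ {z | z.im < 0}] s)
        (𝓝 (Complex.exp (-(π * Hαs) + π * α s * Complex.I)))) ∧
      Complex.exp (-(π * Hαs) - π * α s * Complex.I) =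
        Complex.exp (-(2 * π * α s * Complex.I)) *
          Complex.exp (-(π * Hαs) + π * α s * Complex.I) := by
  have hexp {U : Set ℂ} (hU : ∀ z ∈ U, z.im ≠ 0) {w : ℂ}
      (h : Tendsto (cauchyTransform α A B) (𝓝[U] s) (𝓝 w)) :
      Tendsto Φ (𝓝[U] s) (𝓝 (Complex.exp w)) := by
    refine h.cexp.congr' ?_
    filter_upwards [self_mem_nhdsWithin] with z hz
    simp only [hΦ z (hU z hz), cauchyTransform, smul_eq_mul, div_eq_inv_mul]
  have hH := hasFiniteHilbertTransform_of_slope hs hα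
  refine ⟨_, hH, fun K => ?_, fun K => ?_, ?_⟩
  · have h := hexp (fun _ hz => ne_of_gt hz.2) (tendsto_cauchyTransform_upper (K := K) hs hα hH)
    rwa [Complex.real_smul, smul_eq_mul, mul_right_comm] at h
  · have h := hexp (fun _ hz => ne_of_lt hz.2) (tendsto_cauchyTransform_lower (K := K) hs hα hH)
    rwa [Complex.real_smul, smul_eq_mul, mul_right_comm] at h
  · rw [← Complex.exp_add]
    ring_nf

end

/-- Boundary values of the canonical solution `Φ(z) = exp(∫_A^B α(r)/(z−r) dr)` of the
homogeneous Riemann–Hilbert problem: `Φ^±(s) = exp(−π H[α](s) ∓ iπ α(s))` for `s ∈ (A,B)`,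
so that `Φ⁺(s) = e^{−2πi α(s)} Φ⁻(s)`. -/
theorem boundary_values_of_canonical_solution (A B : ℝ) (hAB : A < B) (α : ℝ → ℝ)
    (γ : ℝ) (hγ : γ ∈ Set.Ioc (0 : ℝ) 1) (C : ℝ) (hC : 0 ≤ C)
    (hα : ∀ r ∈ Set.Icc A B, ∀ r' ∈ Set.Icc A B, |α r - α r'| ≤ C * |r - r'| ^ γ)
    (Φ : ℂ → ℂ)
    (hΦ : ∀ z : ℂ, Φ z = Complex.exp (∫ r in A..B, (α r : ℂ) / (z - (r : ℂ))))
    (s : ℝ) (hs : s ∈ Set.Ioo A B) :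
    ∃ Hαs : ℝ,
      Tendsto (fun ε : ℝ =>
          (∫ r in A..(s - ε), α r / (r - s)) + ∫ r in (s + ε)..B, α r / (r - s))
        (𝓝[>] 0) (𝓝 (Real.pi * Hαs)) ∧
      Tendsto (fun ε : ℝ => Φ ((s : ℂ) + (ε : ℂ) * Complex.I)) (𝓝[>] 0)
        (𝓝 (Complex.exp (-((Real.pi : ℂ) * (Hαs : ℂ)) -
          (Real.pi : ℂ) * (α s : ℂ) * Complex.I))) ∧
      Tendsto (fun ε : ℝ => Φ ((s : ℂ) - (ε : ℂ) * Complex.I)) (𝓝[>] 0)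
        (𝓝 (Complex.exp (-((Real.pi : ℂ) * (Hαs : ℂ)) +
          (Real.pi : ℂ) * (α s : ℂ) * Complex.I))) ∧
      Complex.exp (-((Real.pi : ℂ) * (Hαs : ℂ)) - (Real.pi : ℂ) * (α s : ℂ) * Complex.I) =
        Complex.exp (-(2 * (Real.pi : ℂ) * (α s : ℂ) * Complex.I)) *
          Complex.exp (-((Real.pi : ℂ) * (Hαs : ℂ)) + (Real.pi : ℂ) * (α s : ℂ) * Complex.I) := by
  lift C to NNReal using hC
  lift γ to NNReal using hγ.1.le
  have hIcc : Set.uIcc A B = Set.Icc A B := Set.uIcc_of_le hAB.le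
  have hHolder : HolderOnWith C γ (fun r => (α r : ℂ)) (Set.uIcc A B) := by
    refine holderOnWith_of_dist_le fun r hr r' hr' => ?_
    rw [Complex.isometry_ofReal.dist_eq]
    exact hα r (hIcc ▸ hr) r' (hIcc ▸ hr')
  obtain ⟨H, hH, hupper, hlower, hjump⟩ := boundary_values_of_canonical_solution_general hs
    (intervalIntegrable_slope_of_holderOnWith (mod_cast hγ.1) hHolder
      (hIcc ▸ Set.Ioo_subset_Icc_self hs)) fun z _ => hΦ z
  obtain ⟨Hαs, rfl, hHαs⟩ := hH.exists_ofReal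
  refine ⟨Hαs, ?_, (hupper 1).comp (tendsto_vertical_nhdsWithin_upper s),
    (hlower 1).comp (tendsto_vertical_nhdsWithin_lower s), hjump⟩
  simpa only [smul_eq_mul, inv_mul_eq_div] using hHαs.tendsto
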